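/- Let K be a field of characteristic 0, let f and g be nonconstant, relatively prime polynomials in K[t], set A = f² − g², B = 2fg, C = f² + g², and let w ∈ K[t] be a nonzero polynomial. Then for every integer r ≥ 3, the triple (x, y, z) = (r, 1, 1) is not a solution of (wA)^x + (wB)^y = (wC)^z; that is, (wA)^r + wB ≠ wC for all r ≥ 3. -/

import Mathlib

/-!
Since `C - B = (f - g)²` and `A = (f - g)(f + g)`, a solution `(r, 1, 1)` means
`(w (f - g)(f + g))ʳ = w (f - g)²`. For `r ≥ 3`, cancelling the right-hand side leaves a product
equal to `1` in which both `f - g` and `f + g` still occur. They are therefore units, that is,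
constants, and so are `2f` and `2g`.
-/

open Polynomial

theorem add_mul_two_mul_eq_mul_sq_add_sq_iff {R : Type*} [CommRing R] {a f g w : R} :
    a + w * (2 * f * g) = w * (f ^ 2 + g ^ 2) ↔ a = w * (f - g) ^ 2 := by
  rw [← eq_sub_iff_add_eq]
  ring_nf

theorem mul_mul_pow_add_two_eq_mul_sq_iff {M : Type*} [CommMonoidWithZero M] [IsCancelMulZero M]
    {u v w : M} (hu : u ≠ 0) (hw : w ≠ 0) (k : ℕ) :
    (w * (u * v)) ^ (k + 2) = w * u ^ 2 ↔ w ^ (k + 1) * u ^ k * v ^ (k + 2) = 1 := by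
  have factor : (w * (u * v)) ^ (k + 2) = w * u ^ 2 * (w ^ (k + 1) * u ^ k * v ^ (k + 2)) := by
    simp only [mul_pow, pow_add, sq, pow_one]
    ac_rfl
  rw [factor, mul_eq_left₀ (mul_ne_zero hw (pow_ne_zero 2 hu))]

theorem isUnit_and_isUnit_of_mul_mul_pow_eq_mul_sq {M : Type*} [CommMonoidWithZero M]
    [IsCancelMulZero M] {u v w : M} (hu : u ≠ 0) (hw : w ≠ 0) {r : ℕ} (hr : 3 ≤ r)
    (h : (w * (u * v)) ^ r = w * u ^ 2) : IsUnit u ∧ IsUnit v := by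
  obtain ⟨k, rfl⟩ := Nat.exists_eq_add_of_le' hr
  have product_eq_one : w ^ (k + 2) * u ^ (k + 1) * v ^ (k + 3) = 1 :=
    (mul_mul_pow_add_two_eq_mul_sq_iff hu hw (k + 1)).mp h
  have product_isUnit : IsUnit (w ^ (k + 2) * u ^ (k + 1) * v ^ (k + 3)) :=
    product_eq_one ▸ isUnit_one
  rw [IsUnit.mul_iff, IsUnit.mul_iff] at product_isUnit
  obtain ⟨⟨-, hu_pow⟩, hv_pow⟩ := product_isUnit
  exact ⟨isUnit_pow_succ_iff.mp hu_pow, isUnit_pow_succ_iff.mp hv_pow⟩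

theorem isUnit_sub_and_isUnit_add_of_pow_add_eq {R : Type*} [CommRing R] [NoZeroDivisors R]
    {f g w : R} (hfg : f ≠ g) (hw : w ≠ 0) {r : ℕ} (hr : 3 ≤ r)
    (h : (w * (f ^ 2 - g ^ 2)) ^ r + w * (2 * f * g) = w * (f ^ 2 + g ^ 2)) :
    IsUnit (f - g) ∧ IsUnit (f + g) := by
  rw [add_mul_two_mul_eq_mul_sq_add_sq_iff, sq_sub_sq, mul_comm (f + g)] at h
  exact isUnit_and_isUnit_of_mul_mul_pow_eq_mul_sq (sub_ne_zero.mpr hfg) hw hr h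

theorem natDegree_eq_zero_of_isUnit_sub_of_isUnit_add {R : Type*} [CommRing R] [NoZeroDivisors R]
    (h2 : (2 : R) ≠ 0) {f g : R[X]} (hsub : IsUnit (f - g)) (hadd : IsUnit (f + g)) :
    f.natDegree = 0 := by
  have two_mul_eq : C 2 * f = (f - g) + (f + g) := by
    rw [C_ofNat]
    ring
  rw [← natDegree_C_mul h2, two_mul_eq, ← Nat.le_zero]
  exact natDegree_add_le_of_degree_le (natDegree_eq_zero_of_isUnit hsub).le
    (natDegree_eq_zero_of_isUnit hadd).le

theorem jesmanowicz_poly_not_r11_general {R : Type*} [CommRing R] [NoZeroDivisors R]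
    (h2 : (2 : R) ≠ 0) (f g w : R[X]) (hdeg : 0 < f.natDegree ∨ 0 < g.natDegree)
    (hfg : f ≠ g) (hw : w ≠ 0) (r : ℕ) (hr : 3 ≤ r) :
    (w * (f ^ 2 - g ^ 2)) ^ r + w * (2 * f * g) ≠ w * (f ^ 2 + g ^ 2) := by
  intro h
  obtain ⟨hsub, hadd⟩ := isUnit_sub_and_isUnit_add_of_pow_add_eq hfg hw hr h
  have hf : f.natDegree = 0 := natDegree_eq_zero_of_isUnit_sub_of_isUnit_add h2 hsub hadd
  have hg : g.natDegree = 0 := natDegree_eq_zero_of_isUnit_sub_of_isUnit_add h2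
    (neg_sub f g ▸ hsub.neg) (add_comm f g ▸ hadd)
  exact hdeg.elim hf.not_gt hg.not_gt

theorem jesmanowicz_poly_not_r11
    {K : Type*} [Field K] [CharZero K]
    (f g w : K[X])
    (hf : 0 < f.natDegree) (hg : 0 < g.natDegree)
    (hfg : IsCoprime f g) (hw : w ≠ 0) :
    ∀ r : ℕ, 3 ≤ r →
      (w * (f ^ 2 - g ^ 2)) ^ r + w * (2 * f * g) ≠ w * (f ^ 2 + g ^ 2) :=
  have hne : f ≠ g := fun h ↦
    not_isUnit_of_natDegree_pos f hf (isCoprime_self.mp (h ▸ hfg))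
  jesmanowicz_poly_not_r11_general two_ne_zero f g w (.inl hf) hne hw
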